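/- The functions I₀ and I₂ are infinitely differentiable on (−1/4, 0), and for every h ∈ (−1/4, 0): the k-th derivative of I₀ at h is strictly positive for every integer k ≥ 0; I₂(h) > 0 and I₂'(h) > 0; and the k-th derivative of I₂ at h is strictly negative for every integer k ≥ 2. -/

import Mathlib

/-!
With `s = √(1+4h)` and `w = s² = 1+4h ∈ (0,1)`, the substitution `x = √(1 + s cos θ)` turns the
integrand's radical into `s sin θ / √2`, so that
`I_k(h) = (w/√2) ∫₀^π (1 + s cos θ)^((k-1)/2) sin² θ dθ`.
Expanding by the binomial series and integrating termwise, the odd powers of `cos` drop out and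
`I_k(h) = ∑ₙ C((k-1)/2, 2n) J₂ₙ / ((2n+2)√2) · w^(n+1)` with `J_m = ∫₀^π cos^m θ dθ`
(`hasSum_AbI`); the factor `1/(2n+2)` comes from `∫ cos^m sin² = J_m / (m+2)`.

A power series in `1+4h` converging on `(-1/4,0)` can be differentiated termwise, which gives
smoothness and shows that the sign of the `k`-th derivative is the common sign of the coefficients
of index `≥ k` (`iteratedDeriv_pos_of_hasSum`). All `C(-1/2, 2n)` are positive, and `C(1/2, 2n)` is
negative for `n ≥ 1`. Finally `I₂' > 0`, because the factor `n+1` produced by differentiating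
cancels `1/(2n+2)` and the series resums to `I₂'(h) = √2 ∫₀^π √(1 + s cos θ) dθ`.
-/

open Set

/-- Lower endpoint of the oval projection: `x₋(h) = √(1 − √(1+4h))`. -/
noncomputable def xminus (h : ℝ) : ℝ := Real.sqrt (1 - Real.sqrt (1 + 4*h))

/-- Upper endpoint of the oval projection: `x₊(h) = √(1 + √(1+4h))`. -/
noncomputable def xplus (h : ℝ) : ℝ := Real.sqrt (1 + Real.sqrt (1 + 4*h))

/-- The Abelian integral `I_k(h) = 2∫_{x₋(h)}^{x₊(h)} x^k √(2h + x² − x⁴/2) dx`. -/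
noncomputable def AbI (k : ℕ) (h : ℝ) : ℝ :=
  2 * ∫ x in (xminus h)..(xplus h), x ^ k * Real.sqrt (2*h + x^2 - x^4/2)

open MeasureTheory intervalIntegral

lemma HasSum.of_eq {f g : ℕ → ℝ} {S : ℝ} (H : HasSum f S) (e : ∀ n, g n = f n) : HasSum g S := by
  rwa [funext e]

/-! ### Power series in `1 + 4h` -/

lemma hasDerivAt_of_hasSum {f : ℝ → ℝ} {c : ℕ → ℝ}
    (H : ∀ h ∈ Ioo (-(1:ℝ)/4) 0, HasSum (fun n => c n * (1 + 4*h)^n) (f h))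
    {h : ℝ} (hh : h ∈ Ioo (-(1:ℝ)/4) 0) :
    DifferentiableAt ℝ f h ∧
      HasSum (fun n : ℕ => 4 * (n + 1) * c (n+1) * (1 + 4*h)^n) (deriv f h) := by
  obtain ⟨h1, h2⟩ := hh
  -- `1 + 4h < r < ρ < 1`: the termwise derivatives are dominated at radius `r`, using
  -- convergence of the original series at `ρ`.
  obtain ⟨r, hr1, hr2⟩ := exists_between (show 1 + 4*h < 1 by linarith)
  obtain ⟨ρ, hρ1, hρ2⟩ := exists_between hr2
  have hr0 : 0 < r := by linarith
  have hρ0 : 0 < ρ := by linarith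
  have hsρ : Summable fun n => c n * ρ^n := by
    have := (H ((ρ-1)/4) ⟨by linarith, by linarith⟩).summable
    have e : 1 + 4*((ρ-1)/4) = ρ := by ring
    rwa [e] at this
  obtain ⟨C, hC⟩ : ∃ C, ∀ n, |c n * ρ^n| ≤ C := by
    obtain ⟨C, hC⟩ := hsρ.tendsto_atTop_zero.abs.bddAbove_range
    exact ⟨C, fun n => hC ⟨n, rfl⟩⟩
  have hgeo : Summable fun n : ℕ => (n:ℝ) * (r/ρ)^n := by
    have := summable_pow_mul_geometric_of_norm_lt_one (R := ℝ) 1 (r := r/ρ)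
      (by rw [Real.norm_of_nonneg (by positivity)]; exact (div_lt_one hρ0).2 hρ1)
    simpa using this
  have hu : Summable fun n : ℕ => 4 / r * (n * r^n * |c n|) := by
    refine Summable.mul_left _ ?_
    refine Summable.of_nonneg_of_le (fun n => by positivity) (fun n => ?_) (hgeo.mul_left C)
    have h3 := hC n
    rw [abs_mul, abs_of_pos (pow_pos hρ0 n)] at h3
    calc (n:ℝ) * r^n * |c n| = (|c n| * ρ^n) * (n * (r/ρ)^n) := by
          rw [div_pow]; field_simp
      _ ≤ C * (n * (r/ρ)^n) := by gcongr
  have hmem : h ∈ Ioo (-(1:ℝ)/4) ((r-1)/4) := ⟨h1, by linarith⟩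
  have hbound : ∀ (n : ℕ) (y : ℝ), y ∈ Ioo (-(1:ℝ)/4) ((r-1)/4) →
      ‖c n * (n * (1 + 4*y)^(n-1) * 4)‖ ≤ 4 / r * (n * r^n * |c n|) := by
    rintro n y ⟨hy1, hy2⟩
    have hy0 : 0 ≤ 1 + 4*y := by linarith
    have hyr : 1 + 4*y ≤ r := by linarith
    rw [Real.norm_eq_abs, abs_mul, abs_of_nonneg (a := (n:ℝ) * (1 + 4*y)^(n-1) * 4) (by positivity)]
    rcases n with _ | n
    · simp
    · have h5 : (1 + 4*y)^n ≤ r^n := by gcongr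
      have e : 4 / r * (((n+1:ℕ):ℝ) * r^(n+1) * |c (n+1)|)
          = |c (n+1)| * (((n+1:ℕ):ℝ) * r^n * 4) := by field_simp; ring
      rw [e, Nat.add_sub_cancel]
      gcongr
  have hD := hasDerivAt_tsum_of_isPreconnected (𝕜 := ℝ) hu isOpen_Ioo isPreconnected_Ioo
    (g := fun n y => c n * (1 + 4*y)^n) (g' := fun n y => c n * (n * (1 + 4*y)^(n-1) * 4))
    (fun n y _ => by
      have : HasDerivAt (fun y : ℝ => 1 + 4*y) 4 y := by
        simpa using ((hasDerivAt_id y).const_mul 4).const_add 1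
      exact (this.pow n).const_mul (c n))
    hbound hmem (H h ⟨h1, h2⟩).summable hmem
  have hfe : f =ᶠ[nhds h] fun z => ∑' n, c n * (1 + 4*z)^n := by
    filter_upwards [isOpen_Ioo.mem_nhds (show h ∈ Ioo (-(1:ℝ)/4) 0 from ⟨h1, h2⟩)] with z hz
    exact (H z hz).tsum_eq.symm
  have hD' := hD.congr_of_eventuallyEq hfe
  refine ⟨hD'.differentiableAt, ?_⟩
  rw [hD'.deriv]
  have hS : Summable fun n : ℕ => c n * (n * (1 + 4*h)^(n-1) * 4) :=
    Summable.of_norm_bounded hu fun n => hbound n h hmem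
  have h6 := (hasSum_nat_add_iff' 1).2 hS.hasSum
  simp only [Finset.sum_range_one, Nat.cast_zero, zero_mul, mul_zero, sub_zero,
    Nat.add_sub_cancel] at h6
  refine h6.of_eq fun n => ?_
  push_cast
  ring

lemma contDiffOn_of_hasSum {f : ℝ → ℝ} {c : ℕ → ℝ}
    (H : ∀ h ∈ Ioo (-(1:ℝ)/4) 0, HasSum (fun n => c n * (1 + 4*h)^n) (f h)) :
    ContDiffOn ℝ (⊤ : ℕ∞) f (Ioo (-(1:ℝ)/4) 0) := by
  rw [contDiffOn_infty]
  intro n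
  induction n generalizing f c with
  | zero =>
    rw [Nat.cast_zero, contDiffOn_zero]
    exact fun x hx => (hasDerivAt_of_hasSum H hx).1.continuousAt.continuousWithinAt
  | succ n ih =>
    rw [Nat.cast_succ, contDiffOn_succ_iff_deriv_of_isOpen isOpen_Ioo]
    refine ⟨fun x hx => (hasDerivAt_of_hasSum H hx).1.differentiableWithinAt, by simp, ?_⟩
    exact ih (c := fun n => 4 * (n + 1) * c (n+1)) fun x hx => (hasDerivAt_of_hasSum H hx).2

lemma iteratedDeriv_pos_of_hasSum (k : ℕ) {f : ℝ → ℝ} {c : ℕ → ℝ}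
    (H : ∀ h ∈ Ioo (-(1:ℝ)/4) 0, HasSum (fun n => c n * (1 + 4*h)^n) (f h))
    (hc : ∀ n, k ≤ n → 0 ≤ c n) (hc' : 0 < c (k+1))
    {h : ℝ} (hh : h ∈ Ioo (-(1:ℝ)/4) 0) : 0 < iteratedDeriv k f h := by
  induction k generalizing f c with
  | zero =>
    rw [iteratedDeriv_zero]
    have hw : 0 < 1 + 4*h := by linarith [hh.1]
    have := le_hasSum (H h hh) 1 fun j _ => mul_nonneg (hc j (Nat.zero_le _)) (pow_pos hw j).le
    exact lt_of_lt_of_le (mul_pos hc' (pow_pos hw 1)) this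
  | succ k ih =>
    rw [iteratedDeriv_succ']
    refine ih (c := fun n => 4 * (n + 1) * c (n+1)) (fun x hx => (hasDerivAt_of_hasSum H hx).2)
      (fun n hn => ?_) ?_
    · have := hc (n+1) (by omega)
      positivity
    · positivity

/-! ### Moments of the cosine -/

/-- The moment `J_n = ∫₀^π cos^n θ dθ`. -/
noncomputable def cosMoment (n : ℕ) : ℝ := ∫ θ in (0:ℝ)..Real.pi, Real.cos θ ^ n

lemma cosMoment_add_two (n : ℕ) : cosMoment (n+2) = (n+1)/(n+2) * cosMoment n := by
  unfold cosMoment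
  rw [integral_cos_pow]
  simp

lemma cosMoment_odd (n : ℕ) : cosMoment (2*n+1) = 0 := by
  induction n with
  | zero => simp [cosMoment]
  | succ n ih => rw [show 2*(n+1)+1 = 2*n+1+2 by ring, cosMoment_add_two, ih, mul_zero]

lemma cosMoment_even_pos (n : ℕ) : 0 < cosMoment (2*n) := by
  induction n with
  | zero => simp [cosMoment, Real.pi_pos]
  | succ n ih =>
    rw [show 2*(n+1) = 2*n+2 by ring, cosMoment_add_two]
    positivity

lemma integral_cos_pow_mul_sin_sq (n : ℕ) :
    ∫ θ in (0:ℝ)..Real.pi, Real.cos θ ^ n * Real.sin θ ^ 2 = cosMoment n / (n+2) := by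
  have e : ∀ θ : ℝ, Real.cos θ ^ n * Real.sin θ ^ 2 = Real.cos θ ^ n - Real.cos θ ^ (n+2) := by
    intro θ; rw [Real.sin_sq]; ring
  simp_rw [e]
  rw [intervalIntegral.integral_sub
    (Continuous.intervalIntegrable (by fun_prop) _ _)
    (Continuous.intervalIntegrable (by fun_prop) _ _)]
  change cosMoment n - cosMoment (n+2) = _
  rw [cosMoment_add_two]
  field_simp
  ring

/-! ### Binomial coefficients and the binomial series -/

lemma choose_succ_mul (a : ℝ) (n : ℕ) :
    (n+1) * Ring.choose a (n+1) = Ring.choose a n * (a - n) := by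
  have := Ring.choose_smul_choose a (n := n+1) (k := n) (Nat.le_succ n)
  simpa using this

lemma choose_add_two (a : ℝ) (n : ℕ) :
    Ring.choose a (n+2) = Ring.choose a n * ((a - n) * (a - n - 1) / ((n+1)*(n+2))) := by
  have h1 := choose_succ_mul a n
  have h2 := choose_succ_mul a (n+1)
  push_cast at h2
  rw [mul_div_assoc', eq_div_iff (by positivity)]
  linear_combination (n+1:ℝ) * h2 + (a - (n+1)) * h1

lemma choose_neg_half_pos (n : ℕ) : 0 < Ring.choose (-1/2 : ℝ) (2*n) := by
  induction n with
  | zero => simp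
  | succ n ih =>
    rw [show 2*(n+1) = 2*n+2 by ring, choose_add_two]
    refine mul_pos ih (div_pos ?_ (by positivity))
    push_cast
    have : (0:ℝ) ≤ n := n.cast_nonneg
    nlinarith

lemma choose_half_neg (n : ℕ) : Ring.choose (1/2 : ℝ) (2*(n+1)) < 0 := by
  induction n with
  | zero =>
    rw [show 2*(0+1) = 0+2 by ring, choose_add_two]
    norm_num
  | succ n ih =>
    rw [show 2*(n+1+1) = 2*(n+1)+2 by ring, choose_add_two]
    refine mul_neg_of_neg_of_pos ih (div_pos ?_ (by positivity))
    push_cast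
    have : (0:ℝ) ≤ n := n.cast_nonneg
    nlinarith

lemma hasSum_one_add_rpow (a : ℝ) {y : ℝ} (hy : |y| < 1) :
    HasSum (fun n => Ring.choose a n * y^n) ((1+y)^a) := by
  have h := (Real.one_add_rpow_hasFPowerSeriesOnBall_zero (a := a)).hasSum (y := y)
    (by simpa [← ofReal_norm] using hy)
  simpa [binomialSeries, FormalMultilinearSeries.coeff_ofScalars, mul_comm] using h

/-- Termwise integration of the binomial series against a continuous weight bounded by `1`. -/
lemma hasSum_integral_binomial (a : ℝ) {s : ℝ} (hs0 : 0 ≤ s) (hs1 : s < 1)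
    {φ : ℝ → ℝ} (hφ : Continuous φ) (hφ1 : ∀ θ, |φ θ| ≤ 1) :
    HasSum (fun n => Ring.choose a n * s^n * ∫ θ in (0:ℝ)..Real.pi, Real.cos θ ^ n * φ θ)
      (∫ θ in (0:ℝ)..Real.pi, (1 + s * Real.cos θ)^a * φ θ) := by
  have hsum : Summable fun n => |Ring.choose a n * s^n| :=
    (hasSum_one_add_rpow a (by rwa [abs_of_nonneg hs0])).summable.abs
  have key := intervalIntegral.hasSum_integral_of_dominated_convergence (μ := volume)
    (a := 0) (b := Real.pi)
    (F := fun n θ => Ring.choose a n * s^n * (Real.cos θ ^ n * φ θ))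
    (f := fun θ => (1 + s * Real.cos θ)^a * φ θ)
    (fun n _ => |Ring.choose a n * s^n|)
    (fun n => by
      have : Continuous fun θ => Ring.choose a n * s^n * (Real.cos θ ^ n * φ θ) := by fun_prop
      exact this.aestronglyMeasurable)
    (fun n => Filter.Eventually.of_forall fun θ _ => by
      rw [Real.norm_eq_abs, abs_mul]
      refine mul_le_of_le_one_right (abs_nonneg _) ?_
      rw [abs_mul, abs_pow]
      exact mul_le_one₀ (pow_le_one₀ (abs_nonneg _) (Real.abs_cos_le_one θ)) (abs_nonneg _) (hφ1 θ))
    (Filter.Eventually.of_forall fun _ _ => hsum)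
    (by simp)
    (Filter.Eventually.of_forall fun θ _ => by
      have hlt : |s * Real.cos θ| < 1 := by
        rw [abs_mul, abs_of_nonneg hs0]
        exact (mul_le_of_le_one_right hs0 (Real.abs_cos_le_one θ)).trans_lt hs1
      have := (hasSum_one_add_rpow a hlt).mul_right (φ θ)
      refine this.of_eq fun n => ?_
      rw [mul_pow]; ring)
  simpa only [intervalIntegral.integral_const_mul] using key

/-- A series in `s` whose odd coefficients vanish, rewritten as a series in `w = s²`. -/
lemma hasSum_even {d : ℕ → ℝ} {s S : ℝ} (hd : ∀ n, d (2*n+1) = 0)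
    (H : HasSum (fun n => d n * s^n) S) : HasSum (fun n => d (2*n) * (s^2)^n) S := by
  have hinj : Function.Injective fun n : ℕ => 2*n := fun m n h => by
    simpa using h
  have := (hinj.hasSum_iff (f := fun n => d n * s^n) (a := S) ?_).2 H
  · simpa [Function.comp_def, pow_mul] using this
  · intro x hx
    rcases Nat.even_or_odd' x with ⟨m, rfl | rfl⟩
    · exact absurd ⟨m, rfl⟩ hx
    · simp [hd]

/-! ### The substitution `x = √(1 + s cos θ)` -/

lemma one_add_mul_cos_pos {s : ℝ} (hs0 : 0 ≤ s) (hs1 : s < 1) (θ : ℝ) :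
    0 < 1 + s * Real.cos θ := by
  nlinarith [Real.neg_one_le_cos θ]

lemma AbI_eq (k : ℕ) {h : ℝ} (hh : h ∈ Ioo (-(1:ℝ)/4) 0) :
    AbI k h = (1 + 4*h) / √2 * ∫ θ in (0:ℝ)..Real.pi,
      (1 + √(1+4*h) * Real.cos θ)^(((k:ℝ)-1)/2) * Real.sin θ ^ 2 := by
  obtain ⟨h1, h2⟩ := hh
  have hw : 0 < 1 + 4*h := by linarith
  set s := √(1+4*h) with hs
  have hs0 : 0 < s := Real.sqrt_pos.2 hw
  have hsq : s^2 = 1 + 4*h := Real.sq_sqrt hw.le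
  have hs1 : s < 1 := by nlinarith
  have hpos := one_add_mul_cos_pos hs0.le hs1
  have hsub := integral_comp_mul_deriv' (a := 0) (b := Real.pi)
    (f := fun θ => √(1 + s * Real.cos θ))
    (f' := fun θ => s * (-Real.sin θ) / (2 * √(1 + s * Real.cos θ)))
    (g := fun x => x^k * √(2*h + x^2 - x^4/2))
    (fun θ _ => (((Real.hasDerivAt_cos θ).const_mul s).const_add 1).sqrt (hpos θ).ne')
    (by
      refine Continuous.continuousOn ?_
      refine Continuous.div (by fun_prop) (by fun_prop) fun θ => ?_
      have := Real.sqrt_pos.2 (hpos θ)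
      positivity)
    (by fun_prop)
  have ea : √(1 + s * Real.cos 0) = xplus h := by simp [xplus, hs]
  have eb : √(1 + s * Real.cos Real.pi) = xminus h := by
    rw [Real.cos_pi, mul_neg_one, ← sub_eq_add_neg]; rfl
  simp only [ea, eb] at hsub
  unfold AbI
  rw [integral_symm, ← hsub, ← intervalIntegral.integral_neg,
    ← intervalIntegral.integral_const_mul, ← intervalIntegral.integral_const_mul]
  refine intervalIntegral.integral_congr fun θ hθ => ?_
  rw [uIcc_of_le Real.pi_pos.le] at hθ
  have hsin : 0 ≤ Real.sin θ := Real.sin_nonneg_of_mem_Icc hθ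
  have hX := hpos θ
  simp only [Function.comp]
  set X := 1 + s * Real.cos θ with hXdef
  have e1 : √X^2 = X := Real.sq_sqrt hX.le
  have e2 : 2*h + √X^2 - √X^4/2 = (s * Real.sin θ)^2 / 2 := by
    rw [show √X^4 = (√X^2)^2 by ring, e1, mul_pow, Real.sin_sq, hXdef]
    linear_combination (-1/2) * hsq
  have e3 : √(2*h + √X^2 - √X^4/2) = s * Real.sin θ / √2 := by
    rw [e2, Real.sqrt_div (sq_nonneg _), Real.sqrt_sq (by positivity)]
  have e4 : X^(((k:ℝ)-1)/2) = √X^k / √X := by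
    rw [sub_div, Real.rpow_sub hX, Real.sqrt_eq_rpow, ← Real.rpow_mul_natCast hX.le]
    congr 2; ring
  have hX' : 0 < √X := Real.sqrt_pos.2 hX
  rw [e3, e4, ← hsq]
  field_simp

/-- The coefficients of the expansion in powers of `w = 1 + 4h` of
`(w/√2) ∫₀^π (1 + √w cos θ)^a sin² θ dθ`. -/
noncomputable def abCoeff (a : ℝ) : ℕ → ℝ
  | 0 => 0
  | n+1 => Ring.choose a (2*n) * cosMoment (2*n) / ((2*n+2) * √2)

lemma hasSum_AbI (k : ℕ) {h : ℝ} (hh : h ∈ Ioo (-(1:ℝ)/4) 0) :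
    HasSum (fun n => abCoeff (((k:ℝ)-1)/2) n * (1 + 4*h)^n) (AbI k h) := by
  have hw : 0 < 1 + 4*h := by linarith [hh.1]
  have hs1 : √(1+4*h) < 1 := by
    rw [Real.sqrt_lt' one_pos]; linarith [hh.2]
  have hsq : √(1+4*h)^2 = 1 + 4*h := Real.sq_sqrt hw.le
  rw [AbI_eq k hh]
  set a := ((k:ℝ)-1)/2
  have H := hasSum_integral_binomial a (Real.sqrt_nonneg _) hs1
    (φ := fun θ => Real.sin θ ^ 2) (by fun_prop) (fun θ => by
      rw [abs_of_nonneg (sq_nonneg _)]; exact Real.sin_sq_le_one θ)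
  simp only [integral_cos_pow_mul_sin_sq] at H
  have H2 := hasSum_even (d := fun n => Ring.choose a n * (cosMoment n / (n+2)))
    (s := √(1+4*h)) (fun n => by simp [cosMoment_odd])
    (H.of_eq fun n => by ring)
  rw [hsq] at H2
  refine (hasSum_nat_add_iff' 1).1 ?_
  simp only [Finset.sum_range_one, abCoeff, zero_mul, sub_zero]
  refine (H2.mul_left ((1+4*h)/√2)).of_eq fun n => ?_
  push_cast
  field_simp
  ring

/-- Differentiating the expansion of `I₂` cancels the factor `1/(n+1)` of its coefficients; the result
resums to the binomial series integrated against the constant weight. -/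
lemma deriv_AbI_two {h : ℝ} (hh : h ∈ Ioo (-(1:ℝ)/4) 0) :
    deriv (AbI 2) h =
      √2 * ∫ θ in (0:ℝ)..Real.pi, (1 + √(1+4*h) * Real.cos θ)^(1/2 : ℝ) := by
  have hw : 0 < 1 + 4*h := by linarith [hh.1]
  have hs1 : √(1+4*h) < 1 := by
    rw [Real.sqrt_lt' one_pos]; linarith [hh.2]
  have hsq : √(1+4*h)^2 = 1 + 4*h := Real.sq_sqrt hw.le
  have H := hasSum_integral_binomial (1/2) (Real.sqrt_nonneg _) hs1
    (φ := fun _ => 1) (by fun_prop) (fun θ => by simp)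
  simp only [mul_one] at H
  have H2 := hasSum_even (d := fun n => Ring.choose (1/2:ℝ) n * cosMoment n)
    (s := √(1+4*h)) (fun n => by simp [cosMoment_odd])
    (H.of_eq fun n => by unfold cosMoment; ring)
  rw [hsq] at H2
  have H3 := (hasDerivAt_of_hasSum (fun x hx => hasSum_AbI 2 hx) hh).2
  refine H3.unique ?_
  refine (H2.mul_left √2).of_eq fun n => ?_
  have h2 : √2^2 = (2:ℝ) := Real.sq_sqrt (by norm_num)
  have e : (((2:ℕ):ℝ)-1)/2 = 1/2 := by norm_num
  rw [e, abCoeff]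
  field_simp
  rw [h2]
  ring

/-- `I₀` and `I₂` are smooth on `(−1/4,0)`; all derivatives of `I₀` are positive,
`I₂ > 0`, `I₂' > 0`, and all derivatives of `I₂` of order `≥ 2` are negative. -/
theorem sign_of_derivatives :
    ContDiffOn ℝ (⊤ : ℕ∞) (AbI 0) (Set.Ioo (-(1:ℝ)/4) 0) ∧
    ContDiffOn ℝ (⊤ : ℕ∞) (AbI 2) (Set.Ioo (-(1:ℝ)/4) 0) ∧
    ∀ h ∈ Set.Ioo (-(1:ℝ)/4) 0,
      (∀ k : ℕ, 0 < iteratedDeriv k (AbI 0) h) ∧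
      0 < AbI 2 h ∧ 0 < deriv (AbI 2) h ∧
      (∀ k : ℕ, 2 ≤ k → iteratedDeriv k (AbI 2) h < 0) := by
  refine ⟨contDiffOn_of_hasSum fun h hh => hasSum_AbI 0 hh,
    contDiffOn_of_hasSum fun h hh => hasSum_AbI 2 hh, fun h hh => ?_⟩
  have hs1 : √(1+4*h) < 1 := by
    rw [Real.sqrt_lt' one_pos]; linarith [hh.2]
  have hpos := one_add_mul_cos_pos (Real.sqrt_nonneg (1+4*h)) hs1
  have hcont : ∀ a : ℝ, Continuous fun θ => (1 + √(1+4*h) * Real.cos θ)^a := fun a =>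
    Continuous.rpow_const (by fun_prop) fun θ => Or.inl (hpos θ).ne'
  refine ⟨fun k => ?_, ?_, ?_, fun k hk => ?_⟩
  · have e : (((0:ℕ):ℝ)-1)/2 = -1/2 := by norm_num
    have hc : ∀ n, 0 < abCoeff ((((0:ℕ):ℝ)-1)/2) (n+1) := fun n => by
      rw [e, abCoeff]
      have := choose_neg_half_pos n
      have := cosMoment_even_pos n
      positivity
    refine iteratedDeriv_pos_of_hasSum k (fun x hx => hasSum_AbI 0 hx) (fun n _ => ?_) (hc k) hh
    rcases n with _ | n
    · exact le_rfl
    · exact (hc n).le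
  · rw [AbI_eq 2 hh]
    have hw : 0 < 1 + 4*h := by linarith [hh.1]
    refine mul_pos (by positivity) (intervalIntegral_pos_of_pos_on ?_ (fun θ hθ => ?_) Real.pi_pos)
    · exact ((hcont _).mul (by fun_prop)).intervalIntegrable _ _
    · exact mul_pos (Real.rpow_pos_of_pos (hpos θ) _)
        (pow_pos (Real.sin_pos_of_mem_Ioo hθ) 2)
  · rw [deriv_AbI_two hh]
    refine mul_pos (by positivity) (intervalIntegral_pos_of_pos_on ?_ (fun θ hθ => ?_) Real.pi_pos)
    · exact (hcont _).intervalIntegrable _ _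
    · exact Real.rpow_pos_of_pos (hpos θ) _
  · have e : (((2:ℕ):ℝ)-1)/2 = 1/2 := by norm_num
    have hc : ∀ n, 2 ≤ n → 0 < -abCoeff ((((2:ℕ):ℝ)-1)/2) n := fun n hn => by
      obtain ⟨m, rfl⟩ := Nat.exists_eq_add_of_le' hn
      rw [e, abCoeff, neg_pos]
      have h1 := choose_half_neg m
      have h2 := cosMoment_even_pos (m+1)
      exact div_neg_of_neg_of_pos (mul_neg_of_neg_of_pos h1 h2) (by positivity)
    have hneg := iteratedDeriv_pos_of_hasSum k (f := fun x => -AbI 2 x)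
      (c := fun n => -abCoeff ((((2:ℕ):ℝ)-1)/2) n)
      (fun x hx => by simpa only [neg_mul] using (hasSum_AbI 2 hx).neg)
      (fun n hn => (hc n (hk.trans hn)).le) (hc (k+1) (by omega)) hh
    rw [iteratedDeriv_fun_neg] at hneg
    linarith
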